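/- Let α ∈ [0,1) be a real number such that both α and h₁(α) are left-c.e. Then α ≤_qS h₁(α). -/

import Mathlib

open Filter Topology

/-- `a` is a computable nondecreasing sequence of rationals converging to the real `x`. -/
def CompApproxSeq (x : ℝ) (a : ℕ → ℚ) : Prop :=
  Computable a ∧ Monotone a ∧ Filter.Tendsto (fun n => (a n : ℝ)) Filter.atTop (nhds x)

/-- A real number is left-c.e. if it has a computable nondecreasing sequence of
rationals converging to it (equivalently, its left cut is c.e.). -/
def LeftCE (x : ℝ) : Prop := ∃ a : ℕ → ℚ, CompApproxSeq x a

/-- Solovay reducibility: there are a partial computable `f : ℚ →. ℚ` and a positive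
integer `d` such that for every rational `q < β`, `f q` is defined, `f q < α`, and
`α - f q < d * (β - q)`. -/
def SRed (α β : ℝ) : Prop :=
  ∃ f : ℚ →. ℚ, Partrec f ∧ ∃ d : ℕ, 0 < d ∧
    ∀ q : ℚ, (q : ℝ) < β → ∃ y ∈ f q, (y : ℝ) < α ∧ α - (y : ℝ) < (d : ℝ) * (β - (q : ℝ))

/-- Quasi Solovay reducibility: there are a partial computable `f : ℚ →. ℚ` and positive
integers `d, l` such that for every rational `q < β`, `f q` is defined, `f q < α`, and
`(α - f q) ^ l < d * (β - q)`. -/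
def QSRed (α β : ℝ) : Prop :=
  ∃ f : ℚ →. ℚ, Partrec f ∧ ∃ d l : ℕ, 0 < d ∧ 0 < l ∧
    ∀ q : ℚ, (q : ℝ) < β → ∃ y ∈ f q, (y : ℝ) < α ∧
      (α - (y : ℝ)) ^ l < (d : ℝ) * (β - (q : ℝ))

/-- The `n`-th binary digit (after the binary point, counting from `n = 0`) of the
canonical binary expansion of a real in `[0,1)` (the expansion with infinitely many 0s). -/
noncomputable def binDigit (x : ℝ) (n : ℕ) : ℕ := (⌊x * 2 ^ (n + 1)⌋).toNat % 2

/-- `h₁ x` is the real whose binary expansion lists each bit of `x` followed by its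
complement: if `x = Σ aₙ 2^{-(n+1)}` then
`h₁ x = Σ (aₙ 2^{-(2n+1)} + (1 - aₙ) 2^{-(2n+2)})`. -/
noncomputable def h₁ (x : ℝ) : ℝ :=
  ∑' n : ℕ, ((binDigit x n : ℝ) / 2 ^ (2 * n + 1) + (1 - (binDigit x n : ℝ)) / 2 ^ (2 * n + 2))

/-- The raw code of a rational (numerator code paired with denominator). -/
def rawCode (q : ℚ) : ℕ := @Encodable.encode ℚ Rat.instEncodable q

/-- Natural code of an integer. -/
def zCode (z : ℤ) : ℕ := Equiv.intEquivNat z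

theorem rawCode_eq (q : ℚ) : rawCode q = Nat.pair (zCode q.num) q.den := by
  obtain ⟨a, b, c, d⟩ := q
  rfl

theorem zCode_ofNat (n : ℕ) : zCode (Int.ofNat n) = 2 * n := rfl

theorem zCode_negSucc (n : ℕ) : zCode (Int.negSucc n) = 2 * n + 1 := rfl

theorem zCode_natAbs (z : ℤ) : (zCode z + 1) / 2 = z.natAbs := by
  cases z with
  | ofNat n => rw [zCode_ofNat]; simp; omega
  | negSucc n => rw [zCode_negSucc]; simp; omega

theorem zCode_surj (c : ℕ) : ∃ z : ℤ, zCode z = c := Equiv.intEquivNat.surjective c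

/-- The range of raw codes. -/
def rawSet : Set ℕ := Set.range (@Encodable.encode ℚ Rat.instEncodable)

theorem mem_rawSet (m : ℕ) : m ∈ rawSet ↔
    0 < m.unpair.2 ∧ ((m.unpair.1 + 1) / 2).Coprime m.unpair.2 := by
  constructor
  · rintro ⟨q, rfl⟩
    change 0 < (rawCode q).unpair.2 ∧ (((rawCode q).unpair.1 + 1) / 2).Coprime (rawCode q).unpair.2
    rw [rawCode_eq]
    simp only [Nat.unpair_pair, zCode_natAbs]
    exact ⟨q.den_pos, q.reduced⟩
  · rintro ⟨h1, h2⟩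
    obtain ⟨z, hz⟩ := zCode_surj m.unpair.1
    rw [← hz, zCode_natAbs] at h2
    refine ⟨⟨z, m.unpair.2, h1.ne', h2⟩, ?_⟩
    change rawCode _ = m
    rw [rawCode_eq]
    simp only [hz, Nat.pair_unpair]

theorem coprime_iff_bdd (a d : ℕ) (hd : 0 < d) :
    a.Coprime d ↔ ∀ x < d + 1, ¬ (a % x = 0 ∧ d % x = 0 ∧ x ≠ 1) := by
  constructor
  · rintro h x - ⟨h1, h2, h3⟩
    exact h3 (Nat.eq_one_of_dvd_coprimes h (Nat.dvd_of_mod_eq_zero h1) (Nat.dvd_of_mod_eq_zero h2))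
  · intro h
    by_contra hc
    refine h (a.gcd d) (Nat.lt_succ_of_le (Nat.le_of_dvd hd (Nat.gcd_dvd_right _ _))) ⟨?_, ?_, hc⟩
    · exact Nat.mod_eq_zero_of_dvd (Nat.gcd_dvd_left _ _)
    · exact Nat.mod_eq_zero_of_dvd (Nat.gcd_dvd_right _ _)

theorem primrec_rawSet : PrimrecPred (fun m => m ∈ rawSet) := by
  have hR : PrimrecRel (fun (x : ℕ) (p : ℕ × ℕ) => ¬ (p.1 % x = 0 ∧ p.2 % x = 0 ∧ x ≠ 1)) := by
    refine PrimrecPred.not (PrimrecPred.and ?_ (PrimrecPred.and ?_ (PrimrecPred.not ?_)))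
    · exact Primrec.eq.comp (Primrec.nat_mod.comp (Primrec.fst.comp Primrec.snd) Primrec.fst)
        (Primrec.const 0)
    · exact Primrec.eq.comp (Primrec.nat_mod.comp (Primrec.snd.comp Primrec.snd) Primrec.fst)
        (Primrec.const 0)
    · exact Primrec.eq.comp Primrec.fst (Primrec.const 1)
  have ha : Primrec (fun m : ℕ => (m.unpair.1 + 1) / 2) :=
    Primrec.nat_div.comp (Primrec.succ.comp (Primrec.fst.comp Primrec.unpair)) (Primrec.const 2)
  have hd : Primrec (fun m : ℕ => m.unpair.2) := Primrec.snd.comp Primrec.unpair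
  have h3 := hR.forall_mem_list.comp (Primrec.list_range.comp (Primrec.succ.comp hd)) (ha.pair hd)
  simp only [List.mem_range] at h3
  have h4 : PrimrecPred (fun m : ℕ => 0 < m.unpair.2) :=
    Primrec.nat_lt.comp (Primrec.const 0) hd
  refine (h4.and h3).of_eq fun m => ?_
  rw [mem_rawSet]
  constructor
  · rintro ⟨h, h'⟩
    exact ⟨h, (coprime_iff_bdd _ _ h).2 h'⟩
  · rintro ⟨h, h'⟩
    exact ⟨h, (coprime_iff_bdd _ _ h).1 h'⟩

theorem rawCode_computable : Computable rawCode := by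
  let i1 : DecidablePred (· ∈ Set.range (@Encodable.encode ℚ Rat.instEncodable)) :=
    @Encodable.decidableRangeEncode ℚ Rat.instEncodable
  let i2 : Infinite (Set.range (@Encodable.encode ℚ Rat.instEncodable)) :=
    Infinite.of_injective _ (Equiv.ofInjective _ (@Encodable.encode_injective ℚ Rat.instEncodable)).injective
  let S : Set ℕ := Set.range (@Encodable.encode ℚ Rat.instEncodable)
  have key : ∀ n, rawCode (Denumerable.ofNat ℚ n) = (Nat.Subtype.ofNat S n : ℕ) := by
    intro n
    have : Denumerable.ofNat ℚ n =
        (@Encodable.equivRangeEncode ℚ Rat.instEncodable).symm (Nat.Subtype.ofNat S n) := by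
      apply Option.some_injective
      rw [← Denumerable.decode_eq_ofNat]
      rfl
    rw [this]
    exact congrArg Subtype.val
      ((@Encodable.equivRangeEncode ℚ Rat.instEncodable).apply_symm_apply (Nat.Subtype.ofNat S n))
  have hP : Computable (fun p : ℕ × ℕ => decide (p.2 ∈ S ∧ p.1 < p.2)) := by
    have : PrimrecPred (fun p : ℕ × ℕ => p.2 ∈ S ∧ p.1 < p.2) :=
      (primrec_rawSet.comp Primrec.snd).and (Primrec.nat_lt.comp Primrec.fst Primrec.snd)
    exact this.decide.to_comp
  have hex : ∀ x : ℕ, ∃ m, m ∈ S ∧ x < m := fun x => by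
    obtain ⟨m, hm, h⟩ := (Set.infinite_coe_iff.1 i2).exists_gt x
    exact ⟨m, hm, h⟩
  have hnext : Computable (fun x => Nat.find (hex x)) := by
    have hp : Partrec (fun x : ℕ => Nat.rfind
        ((fun m : ℕ => decide (m ∈ S ∧ x < m) : ℕ → Bool) : ℕ →. Bool)) :=
      Partrec.rfind (p := fun x m => Part.some (decide (m ∈ S ∧ x < m))) hP.partrec
    refine hp.of_eq_tot fun x => ?_
    rw [Nat.mem_rfind]
    refine ⟨?_, fun {m} hm => ?_⟩
    · simpa using! Nat.find_spec (hex x)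
    · simpa using! Nat.find_min (hex x) hm
  have hsucc : ∀ x : S, (Nat.Subtype.succ x : ℕ) = Nat.find (hex x) := by
    intro x
    refine le_antisymm ?_ (Nat.find_min' _ ⟨(Nat.Subtype.succ x).2, Nat.Subtype.lt_succ_self x⟩)
    have h := Nat.find_spec (hex x)
    exact Nat.Subtype.succ_le_of_lt (x := ⟨_, h.1⟩) (y := x) h.2
  have hG : Computable (fun n => (Nat.Subtype.ofNat S n : ℕ)) := by
    have := Computable.nat_rec (f := fun n : ℕ => n)
      (g := fun _ => (Nat.Subtype.ofNat S 0 : ℕ)) (h := fun _ p => Nat.find (hex p.2))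
      Computable.id (Computable.const _) ((hnext.comp (Computable.snd.comp Computable.snd)).to₂)
    refine this.of_eq fun n => ?_
    induction n with
    | zero => rfl
    | succ k ih =>
      simp only [] at ih ⊢
      rw [ih, ← hsucc]; rfl
  refine (hG.comp Computable.encode).of_eq fun q => ?_
  rw [← key, Denumerable.ofNat_encode]

/-- Positive part of the numerator. -/
def nump (q : ℚ) : ℕ := q.num.toNat

/-- Negative part of the numerator. -/
def numm (q : ℚ) : ℕ := (-q.num).toNat

theorem zCode_toNat (z : ℤ) : (zCode z / 2) * (1 - zCode z % 2) = z.toNat := by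
  cases z with
  | ofNat n =>
    rw [zCode_ofNat]
    have h1 : 2 * n / 2 = n := by omega
    have h2 : 2 * n % 2 = 0 := by omega
    rw [h1, h2]; simp
  | negSucc n =>
    rw [zCode_negSucc]
    have h2 : (2 * n + 1) % 2 = 1 := by omega
    rw [h2]; simp

theorem zCode_neg_toNat (z : ℤ) : ((zCode z + 1) / 2) * (zCode z % 2) = (-z).toNat := by
  cases z with
  | ofNat n =>
    rw [zCode_ofNat]
    have h2 : 2 * n % 2 = 0 := by omega
    rw [h2]; simp
  | negSucc n =>
    rw [zCode_negSucc]
    have h1 : (2 * n + 1 + 1) / 2 = n + 1 := by omega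
    have h2 : (2 * n + 1) % 2 = 1 := by omega
    rw [h1, h2]; simp

theorem cop {A : Type*} [Primcodable A] {op : ℕ → ℕ → ℕ} (h : Primrec₂ op) {f g : A → ℕ}
    (hf : Computable f) (hg : Computable g) : Computable (fun x => op (f x) (g x)) :=
  h.to_comp.comp hf hg

theorem cadd {A : Type*} [Primcodable A] {f g : A → ℕ}
    (hf : Computable f) (hg : Computable g) : Computable (fun x => f x + g x) :=
  cop Primrec.nat_add hf hg

theorem cmul {A : Type*} [Primcodable A] {f g : A → ℕ}
    (hf : Computable f) (hg : Computable g) : Computable (fun x => f x * g x) :=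
  cop Primrec.nat_mul hf hg

theorem clt {A : Type*} [Primcodable A] {f g : A → ℕ}
    (hf : Computable f) (hg : Computable g) : Computable (fun x => decide (f x < g x)) :=
  (Primrec.nat_lt.decide).to_comp.comp hf hg

theorem ceq {A : Type*} [Primcodable A] {f g : A → ℕ}
    (hf : Computable f) (hg : Computable g) : Computable (fun x => decide (f x = g x)) :=
  ((Primrec.eq (α := ℕ)).decide).to_comp.comp hf hg

theorem cand {A : Type*} [Primcodable A] {f g : A → Bool}
    (hf : Computable f) (hg : Computable g) : Computable (fun x => f x && g x) :=
  Primrec.and.to_comp.comp hf hg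

theorem nump_computable : Computable nump := by
  have hc : Computable (fun q : ℚ => (rawCode q).unpair.1) :=
    Computable.fst.comp (Computable.unpair.comp rawCode_computable)
  have h2 : Computable (fun _ : ℚ => 2) := Computable.const 2
  have h1 : Computable (fun _ : ℚ => 1) := Computable.const 1
  refine (cmul (cop Primrec.nat_div hc h2)
    (cop Primrec.nat_sub h1 (cop Primrec.nat_mod hc h2))).of_eq fun q => ?_
  simp only [rawCode_eq, Nat.unpair_pair, zCode_toNat, nump]

theorem numm_computable : Computable numm := by
  have hc : Computable (fun q : ℚ => (rawCode q).unpair.1) :=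
    Computable.fst.comp (Computable.unpair.comp rawCode_computable)
  have h2 : Computable (fun _ : ℚ => 2) := Computable.const 2
  have h1 : Computable (fun _ : ℚ => 1) := Computable.const 1
  refine (cmul (cop Primrec.nat_div (cadd hc h1) h2) (cop Primrec.nat_mod hc h2)).of_eq fun q => ?_
  simp only [rawCode_eq, Nat.unpair_pair, zCode_neg_toNat, numm]

theorem den_computable : Computable (fun q : ℚ => q.den) := by
  have hc : Computable (fun q : ℚ => (rawCode q).unpair.2) :=
    Computable.snd.comp (Computable.unpair.comp rawCode_computable)
  refine hc.of_eq fun q => ?_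
  simp only [rawCode_eq, Nat.unpair_pair]

theorem rat_mul_den (q : ℚ) : (q : ℝ) * q.den = (nump q : ℝ) - numm q := by
  have h1 : q * q.den = q.num := Rat.mul_den_eq_num q
  have h2 : (q.num : ℤ) = (nump q : ℤ) - (numm q : ℤ) := by
    unfold nump numm; omega
  have h3 : (q : ℝ) * q.den = (q.num : ℝ) := by exact_mod_cast congrArg (fun x : ℚ => (x : ℝ)) h1
  rw [h3, h2]; push_cast; ring

/-- Search principle for quasi Solovay reducibility. -/
theorem QSRed_of_search {T : Type} [Primcodable T] (α β : ℝ) (R : ℚ × (T × ℚ) → Bool)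
    (hR : Computable R) (d l : ℕ) (hd : 0 < d) (hl : 0 < l)
    (hex : ∀ q : ℚ, (q : ℝ) < β → ∃ t y, R (q, (t, y)) = true)
    (hsound : ∀ q : ℚ, (q : ℝ) < β → ∀ t y, R (q, (t, y)) = true →
      (y : ℝ) < α ∧ (α - (y : ℝ)) ^ l < (d : ℝ) * (β - (q : ℝ))) : QSRed α β := by
  let F : ℚ → ℕ → Option ℚ := fun q m =>
    (@Encodable.decode (T × ℚ) Primcodable.toEncodable m).bind
      fun p => bif R (q, p) then some p.2 else none
  have hF : Computable₂ F := by
    refine Computable.bind_decode_iff.2 ?_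
    refine Computable.cond (hR.comp (Computable.pair Computable.fst Computable.snd)) ?_ ?_
    · exact Computable.option_some.comp (Computable.snd.comp Computable.snd)
    · exact Computable.const none
  refine ⟨fun q => Nat.rfindOpt (F q), Partrec.rfindOpt hF, d, l, hd, hl, fun q hq => ?_⟩
  have hdom : (Nat.rfindOpt (F q)).Dom := by
    rw [Nat.rfindOpt_dom]
    obtain ⟨t, y, h⟩ := hex q hq
    refine ⟨@Encodable.encode (T × ℚ) Primcodable.toEncodable (t, y), y, ?_⟩
    simp only [F, Encodable.encodek, Option.bind_some, h, cond_true, Option.mem_def]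
  refine ⟨(Nat.rfindOpt (F q)).get hdom, Part.get_mem hdom, ?_⟩
  obtain ⟨m, hm⟩ := Nat.rfindOpt_spec (Part.get_mem hdom)
  generalize (Nat.rfindOpt (F q)).get hdom = y at hm
  simp only [F, Option.mem_def, Option.bind_eq_some_iff] at hm
  obtain ⟨⟨t, y'⟩, -, h2⟩ := hm
  cases hc : R (q, (t, y')) with
  | false => rw [hc] at h2; simp at h2
  | true =>
    rw [hc] at h2
    simp only [cond_true, Option.some.injEq] at h2
    subst h2
    exact hsound q hq t _ hc

/-- The case where both reals are rational with a common denominator. -/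
theorem QSRed_rational (A B N : ℕ) (hN : 0 < N) : QSRed ((A : ℝ) / N) ((B : ℝ) / N) := by
  let R : ℚ × (Unit × ℚ) → Bool := fun p =>
    decide (nump p.2.2 * N < A * p.2.2.den + numm p.2.2 * N) &&
    decide (A * (p.1.den * p.2.2.den) + N * nump p.1 * p.2.2.den + N * numm p.2.2 * p.1.den <
      B * (p.1.den * p.2.2.den) + N * nump p.2.2 * p.1.den + N * numm p.1 * p.2.2.den)
  have hRc : Computable R := by
    have q1 : Computable (fun p : ℚ × (Unit × ℚ) => p.1) := Computable.fst
    have y1 : Computable (fun p : ℚ × (Unit × ℚ) => p.2.2) := Computable.snd.comp Computable.snd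
    have c : ∀ n : ℕ, Computable (fun p : ℚ × (Unit × ℚ) => n) := fun n => Computable.const n
    have dq := den_computable.comp q1
    have dy := den_computable.comp y1
    have pq := nump_computable.comp q1
    have py := nump_computable.comp y1
    have mq := numm_computable.comp q1
    have my := numm_computable.comp y1
    exact cand (clt (cmul py (c N)) (cadd (cmul (c A) dy) (cmul my (c N))))
      (clt (cadd (cadd (cmul (c A) (cmul dq dy)) (cmul (cmul (c N) pq) dy)) (cmul (cmul (c N) my) dq))
        (cadd (cadd (cmul (c B) (cmul dq dy)) (cmul (cmul (c N) py) dq)) (cmul (cmul (c N) mq) dy)))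
  have hRiff : ∀ q t y, R (q, (t, y)) = true ↔
      ((y : ℝ) < (A : ℝ) / N ∧ (A : ℝ) / N - y < (B : ℝ) / N - q) := by
    intro q t y
    have hN' : (0 : ℝ) < N := by exact_mod_cast hN
    have hdq : (0 : ℝ) < q.den := by exact_mod_cast q.den_pos
    have hdy : (0 : ℝ) < y.den := by exact_mod_cast y.den_pos
    have eq := rat_mul_den q
    have ey := rat_mul_den y
    simp only [R, Bool.and_eq_true, decide_eq_true_eq]
    refine and_congr ?_ ?_
    · rw [lt_div_iff₀ hN', ← mul_lt_mul_iff_left₀ hdy, ← @Nat.cast_lt ℝ]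
      push_cast
      have : (y : ℝ) * N * y.den = ((nump y : ℝ) - numm y) * N := by rw [← ey]; ring
      rw [this]
      constructor <;> intro h <;> linarith
    · have e1 : (A : ℝ) / N - y < (B : ℝ) / N - q ↔
          ((A : ℝ) / N - y) * (N * (q.den * y.den)) < ((B : ℝ) / N - q) * (N * (q.den * y.den)) := by
        rw [mul_lt_mul_iff_left₀ (by positivity)]
      have e2 : ((A : ℝ) / N - y) * (N * (q.den * y.den)) =
          A * (q.den * y.den) - N * ((nump y : ℝ) - numm y) * q.den := by
        rw [← ey]; field_simp
      have e3 : ((B : ℝ) / N - q) * (N * (q.den * y.den)) =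
          B * (q.den * y.den) - N * ((nump q : ℝ) - numm q) * y.den := by
        rw [← eq]; field_simp
      rw [e1, e2, e3, ← @Nat.cast_lt ℝ]
      push_cast
      constructor <;> intro h <;> linarith
  refine QSRed_of_search _ _ R hRc 1 1 one_pos one_pos (fun q hq => ?_) (fun q hq t y h => ?_)
  · obtain ⟨y, hy1, hy2⟩ := exists_rat_btwn
      (show (A : ℝ) / N - ((B : ℝ) / N - q) < (A : ℝ) / N by linarith)
    exact ⟨(), y, (hRiff _ _ _).2 ⟨hy2, by linarith⟩⟩
  · have := (hRiff _ _ _).1 h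
    exact ⟨this.1, by simpa using this.2⟩

/-- Digit-sequence value in base `r`. -/
noncomputable def sv (r : ℝ) (a : ℕ → ℕ) : ℝ := ∑' n, (a n : ℝ) / r ^ (n + 1)

theorem sv_summable {r : ℝ} (hr : 1 < r) {a : ℕ → ℕ} (ha : ∀ n, a n ≤ 1) :
    Summable (fun n => (a n : ℝ) / r ^ (n + 1)) := by
  have hr0 : 0 < r := by linarith
  have hg : Summable (fun n : ℕ => (1 / r) * (1 / r) ^ n) :=
    (summable_geometric_of_lt_one (by positivity) (by rw [div_lt_one hr0]; exact hr)).mul_left _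
  refine Summable.of_nonneg_of_le (fun n => by positivity) (fun n => ?_) hg
  have : (1 / r) * (1 / r) ^ n = 1 / r ^ (n + 1) := by
    rw [← pow_succ', one_div_pow]
  rw [this]
  have h1 : (a n : ℝ) ≤ 1 := by exact_mod_cast ha n
  gcongr

theorem sv_succ {r : ℝ} (hr : 1 < r) {a : ℕ → ℕ} (ha : ∀ n, a n ≤ 1) :
    sv r a = ((a 0 : ℝ) + sv r (fun n => a (n + 1))) / r := by
  have hr0 : r ≠ 0 := by linarith
  unfold sv
  rw [(sv_summable hr ha).tsum_eq_zero_add, add_div, ← tsum_div_const]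
  congr 1
  · simp
  · refine tsum_congr fun n => ?_
    rw [pow_succ r (n + 1), div_div]

theorem sv_nonneg {r : ℝ} (hr : 1 < r) (a : ℕ → ℕ) : 0 ≤ sv r a := by
  have hr0 : 0 < r := by linarith
  exact tsum_nonneg fun n => by positivity

theorem sv_one {r : ℝ} (hr : 1 < r) : sv r (fun _ => 1) = 1 / (r - 1) := by
  have h := sv_succ hr (a := fun _ => 1) (fun _ => le_rfl)
  have hr0 : r ≠ 0 := by linarith
  have hr1 : r - 1 ≠ 0 := by linarith
  rw [eq_div_iff hr0] at h
  rw [eq_div_iff hr1]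
  push_cast at h
  linarith

theorem sv_le {r : ℝ} (hr : 1 < r) {a : ℕ → ℕ} (ha : ∀ n, a n ≤ 1) : sv r a ≤ 1 / (r - 1) := by
  rw [← sv_one hr]
  have hr0 : 0 < r := by linarith
  refine (sv_summable hr ha).tsum_le_tsum (fun n => ?_) (sv_summable hr (fun _ => le_rfl))
  have h1 : (a n : ℝ) ≤ 1 := by exact_mod_cast ha n
  push_cast
  gcongr

/-- Finite square bound. -/
theorem fin_sq_bound (N : ℕ) : ∀ a : ℕ → ℕ, (∀ n, a n ≤ 1) →
    (∑ n ∈ Finset.range N, (a n : ℝ) / 2 ^ (n + 1)) ≤ 1 ∧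
    (∑ n ∈ Finset.range N, (a n : ℝ) / 2 ^ (n + 1)) ^ 2 ≤
      4 * ∑ n ∈ Finset.range N, (a n : ℝ) / 4 ^ (n + 1) := by
  induction N with
  | zero => intro a _; simp
  | succ N ih =>
    intro a ha
    obtain ⟨h1, h2⟩ := ih (fun n => a (n + 1)) (fun n => ha (n + 1))
    have e : ∀ r : ℝ, r ≠ 0 → ∑ n ∈ Finset.range (N + 1), (a n : ℝ) / r ^ (n + 1) =
        ((a 0 : ℝ) + ∑ n ∈ Finset.range N, (a (n + 1) : ℝ) / r ^ (n + 1)) / r := by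
      intro r hr
      rw [Finset.sum_range_succ', add_div, Finset.sum_div, add_comm]
      congr 1
      · simp
      · refine Finset.sum_congr rfl fun n _ => ?_
        rw [pow_succ r (n + 1), div_div]
    rw [e 2 (by norm_num), e 4 (by norm_num)]
    have hv : 0 ≤ ∑ n ∈ Finset.range N, (a (n + 1) : ℝ) / 2 ^ (n + 1) :=
      Finset.sum_nonneg fun n _ => by positivity
    have hw : 0 ≤ ∑ n ∈ Finset.range N, (a (n + 1) : ℝ) / 4 ^ (n + 1) :=
      Finset.sum_nonneg fun n _ => by positivity
    generalize ∑ n ∈ Finset.range N, (a (n + 1) : ℝ) / 2 ^ (n + 1) = v at *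
    generalize ∑ n ∈ Finset.range N, (a (n + 1) : ℝ) / 4 ^ (n + 1) = w at *
    have h0 := ha 0
    interval_cases a 0
    · refine ⟨by push_cast; linarith, ?_⟩
      push_cast; nlinarith
    · refine ⟨by push_cast; linarith, ?_⟩
      push_cast; nlinarith

theorem sv_sq_bound {a : ℕ → ℕ} (ha : ∀ n, a n ≤ 1) : (sv 2 a) ^ 2 ≤ 4 * sv 4 a := by
  have h2 := (sv_summable (r := 2) (by norm_num) ha).hasSum.tendsto_sum_nat
  have h4 := (sv_summable (r := 4) (by norm_num) ha).hasSum.tendsto_sum_nat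
  exact le_of_tendsto_of_tendsto' (h2.pow 2) (h4.const_mul 4) fun N => (fin_sq_bound N a ha).2

/-- Value of a finite bit string in base `r`. -/
noncomputable def lv (r : ℝ) : List Bool → ℝ
  | [] => 0
  | b :: l => ((b.toNat : ℝ) + lv r l) / r

theorem lv_nonneg {r : ℝ} (hr : 1 < r) : ∀ l, 0 ≤ lv r l
  | [] => le_rfl
  | b :: l => by
    have := lv_nonneg hr l
    have hr0 : 0 < r := by linarith
    simp only [lv]; positivity

theorem lv_le {r : ℝ} (hr : 1 < r) : ∀ l, lv r l ≤ 1 / (r - 1)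
  | [] => by have : 0 < r - 1 := by linarith
             simp only [lv]; positivity
  | b :: l => by
    have h := lv_le hr l
    have hr0 : 0 < r := by linarith
    have hr1 : 0 < r - 1 := by linarith
    rw [le_div_iff₀ hr1] at h
    simp only [lv]
    have hb : (b.toNat : ℝ) ≤ 1 := by exact_mod_cast Bool.toNat_le b
    rw [div_le_div_iff₀ hr0 hr1]
    nlinarith

theorem main_bound : ∀ (l : List Bool) (a : ℕ → ℕ), (∀ n, a n ≤ 1) → lv 2 l < sv 2 a →
    (sv 2 a - lv 2 l) ^ 2 ≤ 6 * (sv 4 a - lv 4 l)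
  | [], a, ha, _ => by
    have h := sv_sq_bound ha
    have h' := sv_nonneg (r := 4) (by norm_num) a
    simp only [lv]
    linarith [sub_zero (sv 2 a), sub_zero (sv 4 a), show (sv 2 a - 0) ^ 2 = sv 2 a ^ 2 by ring]
  | b :: l, a, ha, hlt => by
    have ha' : ∀ n, a (n + 1) ≤ 1 := fun n => ha (n + 1)
    have ih := main_bound l (fun n => a (n + 1)) ha'
    have x1 := sv_le (r := 2) (by norm_num) ha'
    have x0 := sv_nonneg (r := 2) (by norm_num) (fun n => a (n + 1))
    have c0 := sv_nonneg (r := 4) (by norm_num) (fun n => a (n + 1))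
    have y1 := lv_le (r := 2) (by norm_num) l
    have y0 := lv_nonneg (r := 2) (by norm_num) l
    have w1 := lv_le (r := 4) (by norm_num) l
    rw [sv_succ (r := 2) (by norm_num) ha] at hlt ⊢
    rw [sv_succ (r := 4) (by norm_num) ha]
    simp only [lv] at hlt ⊢
    generalize sv 2 (fun n => a (n + 1)) = x at *
    generalize sv 4 (fun n => a (n + 1)) = c at *
    generalize lv 2 l = y at *
    generalize lv 4 l = w at *
    have h0 := ha 0
    norm_num at x1 y1 w1
    interval_cases a 0 <;> cases b <;>
      simp only [Bool.toNat_true, Bool.toNat_false, Nat.cast_zero, Nat.cast_one] at hlt ⊢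
    · have := ih (by linarith)
      nlinarith
    · linarith
    · nlinarith
    · have := ih (by linarith)
      nlinarith

/-- Integer data of a bit string: base-2 value, base-4 value, `2 ^ length`. -/
def bk (l : List Bool) : ℕ × ℕ × ℕ :=
  l.foldr (fun b s => (b.toNat * s.2.2 + s.1, b.toNat * (s.2.2 * s.2.2) + s.2.1, 2 * s.2.2)) (0, 0, 1)

theorem bk_spec (l : List Bool) : 0 < (bk l).2.2 ∧
    lv 2 l = ((bk l).1 : ℝ) / (bk l).2.2 ∧
    lv 4 l = ((bk l).2.1 : ℝ) / ((bk l).2.2 * (bk l).2.2) := by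
  induction l with
  | nil => simp [bk, lv]
  | cons b l ih =>
    obtain ⟨h1, h2, h3⟩ := ih
    have e : bk (b :: l) = (b.toNat * (bk l).2.2 + (bk l).1,
      b.toNat * ((bk l).2.2 * (bk l).2.2) + (bk l).2.1, 2 * (bk l).2.2) := rfl
    have h1' : (0 : ℝ) < (bk l).2.2 := by exact_mod_cast h1
    rw [e]
    refine ⟨by simpa using h1, ?_, ?_⟩
    · simp only [lv]; rw [h2]; push_cast; field_simp
    · simp only [lv]; rw [h3]; push_cast; field_simp; ring

theorem bk_computable : Computable bk := by
  refine Primrec.to_comp ?_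
  have hb : Primrec Bool.toNat := Primrec.dom_bool _
  refine Primrec.list_foldr (h := fun (_ : List Bool) (p : Bool × (ℕ × ℕ × ℕ)) => (p.1.toNat * p.2.2.2 + p.2.1,
    p.1.toNat * (p.2.2.2 * p.2.2.2) + p.2.2.1, 2 * p.2.2.2)) Primrec.id (Primrec.const (0, 0, 1)) ?_
  have p1 : Primrec (fun x : List Bool × (Bool × (ℕ × ℕ × ℕ)) => x.2.1.toNat) :=
    hb.comp (Primrec.fst.comp Primrec.snd)
  have s : Primrec (fun x : List Bool × (Bool × (ℕ × ℕ × ℕ)) => x.2.2) :=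
    Primrec.snd.comp Primrec.snd
  have k := Primrec.fst.comp s
  have d := Primrec.fst.comp (Primrec.snd.comp s)
  have w := Primrec.snd.comp (Primrec.snd.comp s)
  exact Primrec.pair (Primrec.nat_add.comp (Primrec.nat_mul.comp p1 w) k)
    (Primrec.pair (Primrec.nat_add.comp (Primrec.nat_mul.comp p1 (Primrec.nat_mul.comp w w)) d)
      (Primrec.nat_mul.comp (Primrec.const 2) w))

/-- The generic case. -/
theorem QSRed_generic (a : ℕ → ℕ) (ha : ∀ n, a n ≤ 1) (s : ℕ → ℚ) (hs : CompApproxSeq (sv 2 a) s)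
    (hnd : ∀ N, ∑ n ∈ Finset.range N, (a n : ℝ) / 2 ^ (n + 1) < sv 2 a) :
    QSRed (sv 2 a) (1 / 3 + sv 4 a) := by
  obtain ⟨hsc, hsm, hst⟩ := hs
  let R : ℚ × ((ℕ × List Bool) × ℚ) → Bool := fun p =>
    (decide ((bk p.2.1.2).1 * (s p.2.1.1).den < nump (s p.2.1.1) * (bk p.2.1.2).2.2) &&
    decide (3 * ((bk p.2.1.2).2.2 * (bk p.2.1.2).2.2) * nump p.1 <
      ((bk p.2.1.2).2.2 * (bk p.2.1.2).2.2 + 3 * (bk p.2.1.2).2.1) * p.1.den +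
        3 * ((bk p.2.1.2).2.2 * (bk p.2.1.2).2.2) * numm p.1)) &&
    (decide (nump p.2.2 * (bk p.2.1.2).2.2 = (bk p.2.1.2).1 * p.2.2.den) &&
     decide (numm p.2.2 = 0))
  have hRc : Computable R := by
    have q1 : Computable (fun p : ℚ × ((ℕ × List Bool) × ℚ) => p.1) := Computable.fst
    have y1 : Computable (fun p : ℚ × ((ℕ × List Bool) × ℚ) => p.2.2) :=
      Computable.snd.comp Computable.snd
    have l1 : Computable (fun p : ℚ × ((ℕ × List Bool) × ℚ) => bk p.2.1.2) :=
      bk_computable.comp (Computable.snd.comp (Computable.fst.comp Computable.snd))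
    have s1 : Computable (fun p : ℚ × ((ℕ × List Bool) × ℚ) => s p.2.1.1) :=
      hsc.comp (Computable.fst.comp (Computable.fst.comp Computable.snd))
    have c : ∀ n : ℕ, Computable (fun p : ℚ × ((ℕ × List Bool) × ℚ) => n) :=
      fun n => Computable.const n
    have k := Computable.fst.comp l1
    have d := Computable.fst.comp (Computable.snd.comp l1)
    have w := Computable.snd.comp (Computable.snd.comp l1)
    exact cand (cand (clt (cmul k (den_computable.comp s1)) (cmul (nump_computable.comp s1) w))
      (clt (cmul (cmul (c 3) (cmul w w)) (nump_computable.comp q1))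
        (cadd (cmul (cadd (cmul w w) (cmul (c 3) d)) (den_computable.comp q1))
          (cmul (cmul (c 3) (cmul w w)) (numm_computable.comp q1)))))
      (cand (ceq (cmul (nump_computable.comp y1) w) (cmul k (den_computable.comp y1)))
        (ceq (numm_computable.comp y1) (c 0)))
  have hRiff : ∀ q m l y, R (q, ((m, l), y)) = true ↔
      ((lv 2 l < (s m : ℝ) ∧ (q : ℝ) < 1 / 3 + lv 4 l) ∧ (y : ℝ) = lv 2 l) := by
    intro q m l y
    obtain ⟨h1, h2, h3⟩ := bk_spec l
    have hl2 := lv_nonneg (r := 2) (by norm_num) l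
    rw [h2, h3]
    rw [h2] at hl2
    simp only [R, Bool.and_eq_true, decide_eq_true_eq]
    generalize (bk l).1 = k at *
    generalize (bk l).2.1 = d at *
    generalize (bk l).2.2 = w at *
    have hw : (0 : ℝ) < w := by exact_mod_cast h1
    have hdq : (0 : ℝ) < q.den := by exact_mod_cast q.den_pos
    have hdy : (0 : ℝ) < y.den := by exact_mod_cast y.den_pos
    have hds : (0 : ℝ) < (s m).den := by exact_mod_cast (s m).den_pos
    have eq := rat_mul_den q
    have ey := rat_mul_den y
    have es := rat_mul_den (s m)
    refine and_congr (and_congr ?_ ?_) ?_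
    · rw [div_lt_iff₀ hw, ← mul_lt_mul_iff_left₀ hds, ← @Nat.cast_lt ℝ]
      push_cast
      have e : (s m : ℝ) * w * (s m).den = ((nump (s m) : ℝ) - numm (s m)) * w := by
        rw [← es]; ring
      rw [e]
      have hz : numm (s m) = 0 ∨ nump (s m) = 0 := by unfold nump numm; omega
      rcases hz with hz | hz
      · rw [hz]; simp
      · rw [hz]
        have e0 : (0 : ℝ) ≤ (k : ℝ) * (s m).den := by positivity
        have e1 : (0 : ℝ) ≤ (numm (s m) : ℝ) * w := by positivity
        push_cast
        constructor <;> intro h <;> nlinarith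
    · have e1 : (q : ℝ) < 1 / 3 + d / (w * w) ↔
          (q : ℝ) * (3 * (w * w) * q.den) < (1 / 3 + d / (w * w)) * (3 * (w * w) * q.den) := by
        rw [mul_lt_mul_iff_left₀ (by positivity)]
      have e2 : (q : ℝ) * (3 * (w * w) * q.den) = 3 * (w * w) * ((nump q : ℝ) - numm q) := by
        rw [← eq]; ring
      have e3 : ((1 : ℝ) / 3 + d / (w * w)) * (3 * (w * w) * q.den) = (w * w + 3 * d) * q.den := by
        field_simp
      rw [e1, e2, e3, ← @Nat.cast_lt ℝ]
      push_cast
      constructor <;> intro h <;> linarith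
    · have hz : numm y = 0 ∨ (nump y = 0 ∧ 0 < numm y) := by unfold nump numm; omega
      rw [eq_div_iff hw.ne', ← @Nat.cast_inj ℝ]
      push_cast
      have e : (y : ℝ) * w = k ↔ (y : ℝ) * w * y.den = k * y.den := by
        rw [mul_left_inj' hdy.ne']
      have e' : (y : ℝ) * w * y.den = ((nump y : ℝ) - numm y) * w := by
        rw [← ey]; ring
      rw [e, e']
      rcases hz with hz | ⟨hz, hz'⟩
      · rw [hz]; simp
      · have hp : (0 : ℝ) < numm y := by exact_mod_cast hz'
        constructor
        · rintro ⟨-, h⟩; omega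
        · intro h
          exfalso
          rw [hz] at h
          have e0 : (0 : ℝ) ≤ (k : ℝ) * y.den := by positivity
          have e1 : (0 : ℝ) < (numm y : ℝ) * w := by positivity
          push_cast at h
          nlinarith
  refine QSRed_of_search _ _ R hRc 7 2 (by norm_num) (by norm_num) (fun q hq => ?_) ?_
  · have h4 := (sv_summable (r := 4) (by norm_num) ha).hasSum.tendsto_sum_nat
    have hev := h4.eventually (lt_mem_nhds (show (q : ℝ) - 1 / 3 < ∑' n, (a n : ℝ) / 4 ^ (n + 1) by
      have : sv 4 a = ∑' n, (a n : ℝ) / 4 ^ (n + 1) := rfl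
      rw [← this]; linarith))
    obtain ⟨N, hN⟩ := hev.exists
    obtain ⟨m, hm⟩ := (hst.eventually (lt_mem_nhds (hnd N))).exists
    have hlist : ∀ N, ∀ a : ℕ → ℕ, (∀ n, a n ≤ 1) → ∃ l : List Bool, ∀ r : ℝ, r ≠ 0 →
        lv r l = ∑ n ∈ Finset.range N, (a n : ℝ) / r ^ (n + 1) := by
      intro N
      induction N with
      | zero => intro a _; exact ⟨[], fun r _ => by simp [lv]⟩
      | succ N ih =>
        intro a ha
        obtain ⟨l, hl⟩ := ih (fun n => a (n + 1)) (fun n => ha (n + 1))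
        refine ⟨decide (a 0 = 1) :: l, fun r hr => ?_⟩
        have hb : ((decide (a 0 = 1)).toNat : ℝ) = a 0 := by
          have := ha 0
          interval_cases a 0 <;> simp
        rw [Finset.sum_range_succ', lv, hl r hr, hb, add_div, Finset.sum_div, add_comm]
        congr 1
        · refine Finset.sum_congr rfl fun n _ => ?_
          rw [pow_succ r (n + 1), div_div]
        · simp
    obtain ⟨l, hl⟩ := hlist N a ha
    obtain ⟨h1, h2, -⟩ := bk_spec l
    refine ⟨(m, l), ((bk l).1 : ℚ) / (bk l).2.2, (hRiff _ _ _ _).2 ⟨⟨?_, ?_⟩, ?_⟩⟩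
    · rw [hl 2 (by norm_num)]; exact hm
    · rw [hl 4 (by norm_num)]; linarith
    · rw [h2]; push_cast; rfl
  · rintro q hq ⟨m, l⟩ y h
    obtain ⟨⟨g1, g2⟩, g3⟩ := (hRiff _ _ _ _).1 h
    have hle : (s m : ℝ) ≤ sv 2 a :=
      Monotone.ge_of_tendsto (f := fun n => (s n : ℝ))
        (fun i j hij => Rat.cast_le.2 (hsm hij)) hst m
    rw [g3]
    have hlt : lv 2 l < sv 2 a := lt_of_lt_of_le g1 hle
    refine ⟨hlt, ?_⟩
    have := main_bound l a ha hlt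
    push_cast
    linarith

theorem binDigit_le (x : ℝ) (n : ℕ) : binDigit x n ≤ 1 := by
  unfold binDigit; omega

theorem binDigit_sum (x : ℝ) (h0 : 0 ≤ x) (h1 : x < 1) (N : ℕ) :
    ∑ n ∈ Finset.range N, (binDigit x n : ℝ) / 2 ^ (n + 1) = (⌊x * 2 ^ N⌋ : ℝ) / 2 ^ N := by
  induction N with
  | zero =>
    have : ⌊x⌋ = 0 := Int.floor_eq_zero_iff.2 ⟨h0, h1⟩
    simp [this]
  | succ N ih =>
    rw [Finset.sum_range_succ, ih]
    have hk : ((binDigit x N : ℕ) : ℤ) = ⌊x * 2 ^ (N + 1)⌋ - 2 * ⌊x * 2 ^ N⌋ := by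
      have e : x * 2 ^ (N + 1) = 2 * (x * 2 ^ N) := by ring
      have p0 : 0 ≤ ⌊x * 2 ^ N⌋ := Int.floor_nonneg.2 (by positivity)
      have p1 : 2 * ⌊x * 2 ^ N⌋ ≤ ⌊x * 2 ^ (N + 1)⌋ := by
        rw [Int.le_floor, e]; push_cast
        linarith [Int.floor_le (x * 2 ^ N)]
      have p2 : ⌊x * 2 ^ (N + 1)⌋ < 2 * ⌊x * 2 ^ N⌋ + 2 := by
        rw [Int.floor_lt, e]; push_cast
        linarith [Int.lt_floor_add_one (x * 2 ^ N)]
      unfold binDigit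
      generalize ⌊x * 2 ^ (N + 1)⌋ = A at *
      generalize ⌊x * 2 ^ N⌋ = B at *
      omega
    have hk' : (binDigit x N : ℝ) = (⌊x * 2 ^ (N + 1)⌋ : ℝ) - 2 * ⌊x * 2 ^ N⌋ := by
      exact_mod_cast congrArg (fun z : ℤ => (z : ℝ)) hk
    rw [hk']
    field_simp
    ring

theorem sv_binDigit (x : ℝ) (h0 : 0 ≤ x) (h1 : x < 1) : sv 2 (binDigit x) = x := by
  have h2 := (sv_summable (r := 2) (by norm_num) (binDigit_le x)).hasSum.tendsto_sum_nat
  refine tendsto_nhds_unique h2 ?_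
  simp only [binDigit_sum x h0 h1]
  have hg : Tendsto (fun N : ℕ => x - (1 / 2 : ℝ) ^ N) atTop (𝓝 (x - 0)) :=
    tendsto_const_nhds.sub (tendsto_pow_atTop_nhds_zero_of_lt_one (by norm_num) (by norm_num))
  rw [sub_zero] at hg
  refine tendsto_of_tendsto_of_tendsto_of_le_of_le hg tendsto_const_nhds (fun N => ?_) (fun N => ?_)
  · have hp : (0 : ℝ) < 2 ^ N := by positivity
    have := Int.lt_floor_add_one (x * 2 ^ N)
    simp only [one_div_pow]
    rw [le_div_iff₀ hp, sub_mul, one_div_mul_cancel hp.ne']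
    linarith
  · have hp : (0 : ℝ) < 2 ^ N := by positivity
    have := Int.floor_le (x * 2 ^ N)
    exact (div_le_iff₀ hp).2 this

theorem h₁_eq (x : ℝ) : h₁ x = 1 / 3 + sv 4 (binDigit x) := by
  have e : (1 / 3 : ℝ) = sv 4 (fun _ => 1) := by
    rw [sv_one (by norm_num)]; norm_num
  rw [e]
  unfold sv h₁
  rw [← (sv_summable (r := 4) (by norm_num) (fun _ => le_rfl)).tsum_add
    (sv_summable (r := 4) (by norm_num) (binDigit_le x))]
  refine tsum_congr fun n => ?_
  have e1 : (2 : ℝ) ^ (2 * n + 1) = 2 * 4 ^ n := by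
    rw [pow_succ, pow_mul]; norm_num; ring
  have e2 : (2 : ℝ) ^ (2 * n + 2) = 4 * 4 ^ n := by
    rw [pow_add, pow_mul]; norm_num; ring
  rw [e1, e2, pow_succ]
  field_simp
  push_cast
  ring

theorem QSRed_dyadic (x : ℝ) (h0 : 0 ≤ x) (h1 : x < 1) (N : ℕ)
    (hN : sv 2 (binDigit x) ≤ ∑ n ∈ Finset.range N, (binDigit x n : ℝ) / 2 ^ (n + 1)) :
    QSRed (sv 2 (binDigit x)) (1 / 3 + sv 4 (binDigit x)) := by
  have hs := sv_summable (r := 2) (by norm_num) (binDigit_le x)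
  have hz : ∀ n, N ≤ n → binDigit x n = 0 := by
    intro n hn
    by_contra hne
    have hle : ∑ k ∈ insert n (Finset.range N), (binDigit x k : ℝ) / 2 ^ (k + 1) ≤
        sv 2 (binDigit x) := hs.sum_le_tsum _ (fun k _ => by positivity)
    rw [Finset.sum_insert (by simpa using hn)] at hle
    have : (0 : ℝ) < (binDigit x n : ℝ) / 2 ^ (n + 1) := by
      have : (0 : ℝ) < binDigit x n := by exact_mod_cast Nat.pos_of_ne_zero hne
      positivity
    linarith
  have hfin : ∀ r : ℝ, sv r (binDigit x) =
      ∑ n ∈ Finset.range N, (binDigit x n : ℝ) / r ^ (n + 1) := fun r =>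
    tsum_eq_sum fun n hn => by rw [hz n (by simpa using hn)]; simp
  have hnat : ∀ r : ℕ, 0 < r → ∃ K : ℕ, ∑ n ∈ Finset.range N, (binDigit x n : ℝ) / (r : ℝ) ^ (n + 1)
      = (K : ℝ) / (r : ℝ) ^ N := by
    intro r hr
    have hr' : (r : ℝ) ≠ 0 := by exact_mod_cast hr.ne'
    refine ⟨∑ n ∈ Finset.range N, binDigit x n * r ^ (N - (n + 1)), ?_⟩
    push_cast
    rw [Finset.sum_div]
    refine Finset.sum_congr rfl fun n hn => ?_
    have hn' : n + 1 ≤ N := Finset.mem_range.1 hn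
    have : (r : ℝ) ^ N = r ^ (N - (n + 1)) * r ^ (n + 1) := by
      rw [← pow_add]; congr 1; omega
    rw [this]
    field_simp
  obtain ⟨K, hK⟩ := hnat 2 (by norm_num)
  obtain ⟨L, hL⟩ := hnat 4 (by norm_num)
  have := QSRed_rational (K * 2 ^ N * 3) (4 ^ N + 3 * L) (3 * 4 ^ N) (by positivity)
  convert this using 1
  · rw [hfin]; push_cast at hK ⊢; rw [hK]
    have : (4 : ℝ) ^ N = 2 ^ N * 2 ^ N := by rw [← mul_pow]; norm_num
    rw [this]; field_simp
  · rw [hfin]; push_cast at hL ⊢; rw [hL]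
    field_simp

/-- If `α ∈ [0,1)` and both `α` and `h₁ α` are left-c.e., then `α ≤_qS h₁ α`. -/
theorem stmt7 (α : ℝ) (h0 : 0 ≤ α) (h1 : α < 1)
    (hα : LeftCE α) (hh : LeftCE (h₁ α)) : QSRed α (h₁ α) := by

  have hx := sv_binDigit α h0 h1
  rw [h₁_eq]
  have goal : QSRed (sv 2 (binDigit α)) (1 / 3 + sv 4 (binDigit α)) := by
    by_cases hd : ∃ N, sv 2 (binDigit α) ≤
        ∑ n ∈ Finset.range N, (binDigit α n : ℝ) / 2 ^ (n + 1)
    · obtain ⟨N, hN⟩ := hd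
      exact QSRed_dyadic α h0 h1 N hN
    · push Not at hd
      obtain ⟨s, hs⟩ := hα
      exact QSRed_generic (binDigit α) (binDigit_le α) s (by rw [hx]; exact hs) hd
  rwa [hx] at goal
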